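/- arXiv:1012.5591 — 2 statements merged into one kernel-verified Lean document; each statement's English description precedes it below -/
import Mathlib

section
/- For every ε ∈ (0, 4π) there exists a constant C_ε > 0 such that for all u ∈ Σ with H(u) ≤ 1 one has ∫_B e^{(4π−ε) u(x)²} dx ≤ C_ε. -/
/-!
The proof is a ground state substitution followed by a one-dimensional Moser-type estimate.

The function `φ = √(1 - |x|²)` satisfies `-Δφ - φ / (1 - |x|²)² = φ / (1 - |x|²)`, so for `u = φ v`
one has `H(u) = ∫ φ² |∇v|² + ∫ u² / (1 - |x|²)`. Both terms are nonnegative, hence each is at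
most `1` when `H(u) ≤ 1`. For radial nonincreasing `u` the second term bounds `u` on
`1/2 ≤ |x| < 1`, and the first, through Young's inequality (an optimized Cauchy–Schwarz), bounds the
growth of `u` towards the origin: either `u ≤ 3` or `2π (u - 3)² ≤ log (1 / |x|)`. This is `one_dim`
for the radial profile and `sigma_pointwise` on the disc.

Absorbing the constant `3` costs a factor `1 + η` in front of the logarithm, which the gap `ε`
allows: `exp ((4π - ε) u²) ≤ C |x|^(-p)` with `p = 2 - ε / (4π) < 2`, an integrable majorant
that does not depend on `u`.
-/

open MeasureTheory Real Filter

noncomputable section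

/-- `ℝ²` as a Euclidean space. -/
abbrev E2 : Type := EuclideanSpace ℝ (Fin 2)

/-- The open unit disc in `ℝ²`. -/
def B2 : Set E2 := Metric.ball 0 1

/-- `u ∈ C_c^∞(B)`: a smooth function with compact support contained in the open unit disc. -/
def IsTest (u : E2 → ℝ) : Prop :=
  ContDiff ℝ (⊤ : ℕ∞) u ∧ HasCompactSupport u ∧ tsupport u ⊆ B2

/-- `u ∈ Σ`: a smooth compactly supported function on the unit disc which is radially
symmetric and nonincreasing in the radius (encoded as: `‖x‖ ≤ ‖y‖ → u y ≤ u x`, which is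
equivalent to radial symmetry together with monotonicity in `r`). -/
def IsSigma (u : E2 → ℝ) : Prop :=
  IsTest u ∧ ∀ x y : E2, ‖x‖ ≤ ‖y‖ → u y ≤ u x

/-- The localized Hardy functional `H_Ω(u) = ∫_Ω |∇u|² − ∫_Ω u²/(1−|x|²)²`. -/
def HOn (Ω : Set E2) (u : E2 → ℝ) : ℝ :=
  (∫ x in Ω, ‖gradient u x‖ ^ 2) - ∫ x in Ω, (u x) ^ 2 / (1 - ‖x‖ ^ 2) ^ 2

/-- The Hardy functional `H(u) = H_B(u)`. -/
def H (u : E2 → ℝ) : ℝ := HOn B2 u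

/-- The point `(r, 0) ∈ ℝ²`, used to evaluate a radial function at radius `r`. -/
def pt (r : ℝ) : E2 := EuclideanSpace.single 0 r

/-- Growth bound for the profile `U` of a radial nonincreasing function, from its Hardy energy
in polar coordinates. With `W = dU + r U / (1 - r²)`, which is `√(1 - r²)` times the derivative of
`U / √(1 - r²)`, the energy equals `2π ∫ (r W² + r U² / (1 - r²)) dr`. The second term bounds
`U (1 / 2)` by monotonicity, and the first controls `U r - U (1 / 2)` through Young's inequality
with a free parameter `a`, optimized at the end. -/
lemma one_dim (U dU : ℝ → ℝ) (R : ℝ) (hU : ∀ r, HasDerivAt U (dU r) r) (hc : Continuous dU)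
    (hR : 1 / 2 ≤ R) (hR1 : R < 1) (hsupp : ∀ r, R ≤ r → U r = 0)
    (hanti : ∀ r s, 0 ≤ r → r ≤ s → U s ≤ U r)
    (hH : 2 * π * ∫ r in (0 : ℝ)..R, (r * dU r ^ 2 - r * (U r ^ 2 / (1 - r ^ 2) ^ 2)) ≤ 1) :
    ∀ r, 0 < r → r < 1 → U r ≤ 3 ∨ 2 * π * (U r - 3) ^ 2 ≤ -log r := by
  have hUc : Continuous U := continuous_iff_continuousAt.2 fun r => (hU r).continuousAt
  have hpos : ∀ r ∈ Set.Icc 0 R, 0 < 1 - r ^ 2 := by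
    intro r hr
    nlinarith [hr.1, hr.2]
  set W : ℝ → ℝ := fun r => dU r + r * U r / (1 - r ^ 2) with hW
  set E : ℝ → ℝ := fun r => r * W r ^ 2 + r * (U r ^ 2 / (1 - r ^ 2)) with hE
  have hWc : ContinuousOn W (Set.Icc 0 R) := by
    apply ContinuousOn.add hc.continuousOn
    apply ContinuousOn.div (by fun_prop) (by fun_prop)
    intro r hr; exact (hpos r hr).ne'
  have hQc : ContinuousOn (fun r => U r ^ 2 / (1 - r ^ 2)) (Set.Icc 0 R) := by
    apply ContinuousOn.div (by fun_prop) (by fun_prop)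
    intro r hr; exact (hpos r hr).ne'
  have hEc : ContinuousOn E (Set.Icc 0 R) := by
    apply ContinuousOn.add
    · exact continuousOn_id.mul (hWc.pow 2)
    · exact continuousOn_id.mul hQc
  have hFc : ContinuousOn (fun r => r * dU r ^ 2 - r * (U r ^ 2 / (1 - r ^ 2) ^ 2))
      (Set.Icc 0 R) := by
    apply ContinuousOn.sub (by fun_prop)
    apply continuousOn_id.mul
    apply ContinuousOn.div (by fun_prop) (by fun_prop)
    intro r hr; exact (pow_pos (hpos r hr) 2).ne'
  have hE0 : ∀ r ∈ Set.Icc 0 R, 0 ≤ E r := by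
    intro r hr
    have := hpos r hr
    have := hr.1
    simp only [hE]
    positivity
  have h0R : (0 : ℝ) ≤ R := by linarith
  have hintg : ∀ {f : ℝ → ℝ} {a b : ℝ}, ContinuousOn f (Set.Icc 0 R) → 0 ≤ a → a ≤ b → b ≤ R →
      IntervalIntegrable f volume a b := by
    intro f a b hf ha hab hb
    apply ContinuousOn.intervalIntegrable
    rw [Set.uIcc_of_le hab]
    exact hf.mono (Set.Icc_subset_Icc ha hb)
  -- The ground state identity: the two integrands differ by an exact derivative.
  have hder : ∀ r ∈ Set.uIcc 0 R, HasDerivAt (fun r => r ^ 2 * U r ^ 2 / (1 - r ^ 2))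
      (E r - (r * dU r ^ 2 - r * (U r ^ 2 / (1 - r ^ 2) ^ 2))) r := by
    intro r hr
    rw [Set.uIcc_of_le h0R] at hr
    have h1 := hpos r hr
    have hd := (((hasDerivAt_id r).pow 2).mul ((hU r).pow 2)).div
      ((hasDerivAt_const r (1 : ℝ)).sub ((hasDerivAt_id r).pow 2)) h1.ne'
    refine hd.congr_deriv ?_
    simp only [hE, hW, id, Pi.mul_apply, Pi.pow_apply, Pi.sub_apply]
    field_simp
    ring
  have hEtot : ∫ r in (0 : ℝ)..R, E r ≤ 1 / (2 * π) := by
    have h := intervalIntegral.integral_eq_sub_of_hasDerivAt hder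
      ((hintg hEc le_rfl h0R le_rfl).sub (hintg hFc le_rfl h0R le_rfl))
    rw [intervalIntegral.integral_sub (hintg hEc le_rfl h0R le_rfl) (hintg hFc le_rfl h0R le_rfl)] at h
    simp only [hsupp R le_rfl] at h
    norm_num at h
    rw [le_div_iff₀ (by positivity)]
    have : ∫ r in (0 : ℝ)..R, E r = ∫ r in (0 : ℝ)..R,
      (r * dU r ^ 2 - r * (U r ^ 2 / (1 - r ^ 2) ^ 2)) := by linarith
    rw [this]; linarith
  have hEsub : ∀ a b, 0 ≤ a → a ≤ b → b ≤ R → ∫ r in a..b, E r ≤ 1 / (2 * π) := by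
    intro a b ha hab hb
    refine le_trans ?_ hEtot
    apply intervalIntegral.integral_mono_interval ha hab hb _ (hintg hEc le_rfl h0R le_rfl)
    filter_upwards [ae_restrict_mem measurableSet_Ioc] with r hr
    exact hE0 r ⟨hr.1.le, hr.2⟩
  have hU0 : ∀ r, 0 ≤ r → 0 ≤ U r := by
    intro r hr
    have h := hanti r (max r R) hr (le_max_left _ _)
    rwa [hsupp _ (le_max_right _ _)] at h
  -- Monotonicity: the mass of `U²` on `[0, 1/2]` dominates that of the constant `U (1/2)²`.
  have hhalf : U (1 / 2) ≤ 2 := by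
    have h1 : ∫ s in (0 : ℝ)..(1 / 2), s * U (1 / 2) ^ 2 ≤ ∫ s in (0 : ℝ)..(1 / 2), E s := by
      apply intervalIntegral.integral_mono_on (by norm_num)
        (Continuous.intervalIntegrable (by fun_prop) _ _)
        (hintg hEc le_rfl (by norm_num) hR)
      intro s hs
      have hm := hanti s (1 / 2) hs.1 hs.2
      have hp := hpos s ⟨hs.1, hs.2.trans hR⟩
      have hsq : U (1 / 2) ^ 2 ≤ U s ^ 2 := pow_le_pow_left₀ (hU0 _ (by norm_num)) hm 2
      have hdiv : U s ^ 2 ≤ U s ^ 2 / (1 - s ^ 2) := by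
        rw [le_div_iff₀ hp]
        nlinarith [mul_nonneg (sq_nonneg (U s)) (sq_nonneg s)]
      have hmul := mul_le_mul_of_nonneg_left (hsq.trans hdiv) hs.1
      have : 0 ≤ s * W s ^ 2 := mul_nonneg hs.1 (sq_nonneg _)
      simp only [hE]
      linarith
    have h2 := h1.trans (hEsub 0 (1 / 2) le_rfl (by norm_num) hR)
    rw [intervalIntegral.integral_mul_const, integral_id, le_div_iff₀ (by positivity)] at h2
    nlinarith [pi_gt_three, sq_nonneg (U (1 / 2)), hU0 (1 / 2) (by norm_num)]
  intro r hr0 hr1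
  rcases le_or_gt (1 / 2) r with hr | hr
  · left
    linarith [hanti (1 / 2) r (by norm_num) hr]
  by_cases hD : U r ≤ 3
  · exact Or.inl hD
  right
  push Not at hD
  have hbound : ∀ a, 0 < a → U r - 3 ≤ a / (4 * π) + -log r / (2 * a) := by
    intro a ha
    have hFTC : ∫ s in r..(1 / 2), -dU s = U r - U (1 / 2) := by
      rw [intervalIntegral.integral_neg,
        intervalIntegral.integral_eq_sub_of_hasDerivAt (fun s _ => hU s)
          (hc.intervalIntegrable _ _)]
      ring
    have hinvc : IntervalIntegrable (fun s : ℝ => 1 / (2 * a) * s⁻¹) volume r (1 / 2) := by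
      apply ContinuousOn.intervalIntegrable
      rw [Set.uIcc_of_le hr.le]
      apply continuousOn_const.mul
      apply continuousOn_id.inv₀
      intro s hs
      exact (hr0.trans_le hs.1).ne'
    have hlin : IntervalIntegrable (fun s : ℝ => 2 / 3 * s) volume r (1 / 2) :=
      Continuous.intervalIntegrable (by fun_prop) _ _
    have hEi := (hintg hEc hr0.le hr.le hR).const_mul ((a + 1) / 2)
    have hle : ∫ s in r..(1 / 2), -dU s ≤
        ∫ s in r..(1 / 2), ((a + 1) / 2 * E s + 1 / (2 * a) * s⁻¹ + 2 / 3 * s) := by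
      apply intervalIntegral.integral_mono_on hr.le (hc.neg.intervalIntegrable _ _)
        ((hEi.add hinvc).add hlin)
      intro s hs
      have hs0 : 0 < s := hr0.trans_le hs.1
      have hp := hpos s ⟨hs0.le, hs.2.trans hR⟩
      have h34 : 3 / 4 ≤ 1 - s ^ 2 := by nlinarith [hs.2]
      -- Young: `-W ≤ (a / 2) s W² + 1 / (2 a s)`.
      have hY : -W s ≤ a / 2 * (s * W s ^ 2) + 1 / (2 * a) * s⁻¹ := by
        have : a / 2 * (s * W s ^ 2) + 1 / (2 * a) * s⁻¹ + W s
            = (a * s * W s + 1) ^ 2 / (2 * a * s) := by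
          field_simp
          ring
        have h2 : 0 ≤ (a * s * W s + 1) ^ 2 / (2 * a * s) := by positivity
        linarith
      have hZ : s * U s / (1 - s ^ 2) ≤ 1 / 2 * (s * (U s ^ 2 / (1 - s ^ 2))) + 2 / 3 * s := by
        have : 1 / 2 * (s * (U s ^ 2 / (1 - s ^ 2))) + 2 / 3 * s - s * U s / (1 - s ^ 2)
          = s * (1 / 2 * (U s - 1) ^ 2 + (2 / 3 * (1 - s ^ 2) - 1 / 2)) / (1 - s ^ 2) := by
          field_simp
          ring
        have h2 : 0 ≤ s * (1 / 2 * (U s - 1) ^ 2 + (2 / 3 * (1 - s ^ 2) - 1 / 2)) / (1 - s ^ 2) := by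
          apply div_nonneg (mul_nonneg hs0.le _) hp.le
          nlinarith [sq_nonneg (U s - 1)]
        linarith
      have h5 : 0 ≤ s * W s ^ 2 := by positivity
      have h6 : 0 ≤ s * (U s ^ 2 / (1 - s ^ 2)) := by positivity
      have hUW : -dU s = -W s + s * U s / (1 - s ^ 2) := by simp only [hW]; ring
      have hEs : E s = s * W s ^ 2 + s * (U s ^ 2 / (1 - s ^ 2)) := rfl
      rw [Pi.neg_apply, hUW, hEs]
      nlinarith [mul_nonneg ha.le h6]
    rw [hFTC, intervalIntegral.integral_add (hEi.add hinvc) hlin,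
      intervalIntegral.integral_add hEi hinvc, intervalIntegral.integral_const_mul,
      intervalIntegral.integral_const_mul, intervalIntegral.integral_const_mul,
      integral_inv_of_pos hr0 (by norm_num), integral_id] at hle
    have h7 := mul_le_mul_of_nonneg_left (hEsub r (1 / 2) hr0.le hr.le hR)
      (show 0 ≤ (a + 1) / 2 by positivity)
    have h8 : (a + 1) / 2 * (1 / (2 * π)) ≤ a / (4 * π) + 1 / 12 := by
      have : (a + 1) / 2 * (1 / (2 * π)) = a / (4 * π) + 1 / (4 * π) := by
        field_simp
        ring
      have h9 : 1 / (4 * π) ≤ 1 / 12 :=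
        one_div_le_one_div_of_le (by norm_num) (by linarith [pi_gt_three])
      linarith
    have h10 : 1 / (2 * a) * log (1 / 2 / r) ≤ -log r / (2 * a) := by
      rw [log_div (by norm_num) hr0.ne', div_mul_eq_mul_div, one_mul]
      apply div_le_div_of_nonneg_right _ (by positivity)
      have : log (1 / 2) ≤ 0 := log_nonpos (by norm_num) (by norm_num)
      linarith
    nlinarith [sq_nonneg r]
  have hD0 : 0 < U r - 3 := by linarith
  -- The optimal parameter in Young's inequality.
  have h := hbound (2 * π * (U r - 3)) (by positivity)
  have h1 : 2 * π * (U r - 3) / (4 * π) = (U r - 3) / 2 := by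
    field_simp
    ring
  rw [h1] at h
  have h2 : (U r - 3) / 2 ≤ -log r / (2 * (2 * π * (U r - 3))) := by linarith
  rw [le_div_iff₀ (by positivity)] at h2
  linarith

/-- Polar coordinates for radial functions on the plane. -/
lemma integral_radial (f : ℝ → ℝ) :
    ∫ x : E2, f ‖x‖ = 2 * π * ∫ r in Set.Ioi (0 : ℝ), r * f r := by
  rw [integral_fun_norm_addHaar]
  have h : (volume : Measure E2).real (Metric.ball 0 1) = π := by
    simp [Measure.real, EuclideanSpace.volume_ball_fin_two]
    positivity
  simp [h, mul_assoc]

/-- Polar coordinates when the profile vanishes beyond radius `R`. -/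
lemma integral_radial_of_supp (f : ℝ → ℝ) {R : ℝ} (hR : 0 ≤ R) (hf : ∀ r, R ≤ r → f r = 0) :
    ∫ x : E2, f ‖x‖ = 2 * π * ∫ r in (0 : ℝ)..R, r * f r := by
  rw [integral_radial, intervalIntegral.integral_of_le hR]
  congr 1
  apply setIntegral_eq_of_subset_of_forall_sdiff_eq_zero measurableSet_Ioi
    Set.Ioc_subset_Ioi_self
  intro r hr
  have : R < r := by
    by_contra h
    exact hr.2 ⟨hr.1, not_lt.1 h⟩
  rw [hf r this.le, mul_zero]

lemma setIntegral_radial_of_supp (f : ℝ → ℝ) {R : ℝ} (hR : 0 ≤ R) (hR1 : R < 1)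
    (hf : ∀ r, R ≤ r → f r = 0) :
    ∫ x in B2, f ‖x‖ = 2 * π * ∫ r in (0 : ℝ)..R, r * f r := by
  rw [← integral_radial_of_supp f hR hf]
  apply setIntegral_eq_integral_of_forall_compl_eq_zero
  intro x hx
  apply hf
  simp only [B2, Metric.mem_ball, dist_zero_right, not_lt] at hx
  linarith

lemma norm_pt (r : ℝ) : ‖pt r‖ = |r| := by
  simp [pt]

lemma sigma_eq_radial {u : E2 → ℝ} (hu : IsSigma u) {x y : E2} (h : ‖x‖ = ‖y‖) : u x = u y :=
  le_antisymm (hu.2 _ _ h.ge) (hu.2 _ _ h.le)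

/-- Along every ray the profile of a radial function is the function itself. -/
lemma hasDerivAt_profile {u : E2 → ℝ} (hu : IsSigma u) {e : E2} (he : ‖e‖ = 1) (r : ℝ) :
    HasDerivAt (fun t => u (pt t)) (inner ℝ (gradient u (r • e)) e) r := by
  have hd : DifferentiableAt ℝ u (r • e) := (hu.1.1.differentiable (by simp)) _
  have hl : HasDerivAt (fun t : ℝ => t • e) e r := by
    simpa using (hasDerivAt_id r).smul_const e
  have h := hd.hasGradientAt.hasFDerivAt.comp_hasDerivAt r hl
  have heq : (fun t => u (pt t)) = u ∘ fun t : ℝ => t • e := by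
    funext t
    exact sigma_eq_radial hu (by simp [norm_pt, norm_smul, he])
  rw [heq]
  simpa using h

/-- Growth bound for `u ∈ Σ` with `H(u) ≤ 1`: the critical `2π u² ≤ log (1 / |x|)` up to the
additive constant `3`. The gradient term of `H` is only bounded below, by the radial derivative. -/
lemma sigma_pointwise {u : E2 → ℝ} (hu : IsSigma u) (hH : H u ≤ 1) :
    ∀ x : E2, x ≠ 0 → ‖x‖ < 1 → u x ≤ 3 ∨ 2 * π * (u x - 3) ^ 2 ≤ -log ‖x‖ := by
  obtain ⟨R₀, hR₀, hsub⟩ := exists_lt_subset_ball (isClosed_tsupport u) hu.1.2.2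
  set R := max R₀ (1 / 2) with hRdef
  have hR1 : R < 1 := max_lt hR₀ (by norm_num)
  have hR : 1 / 2 ≤ R := le_max_right _ _
  have hR0 : 0 ≤ R := by linarith
  have hu0 : ∀ x : E2, R ≤ ‖x‖ → x ∉ tsupport u := by
    intro x hx hxs
    have := hsub hxs
    rw [mem_ball_zero_iff] at this
    linarith [le_max_left R₀ (1 / 2)]
  have he0 : ‖pt 1‖ = 1 := by simp [norm_pt]
  set U : ℝ → ℝ := fun t => u (pt t) with hUdef
  set dU : ℝ → ℝ := fun r => inner ℝ (gradient u (r • pt 1)) (pt 1) with hdUdef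
  have hgc : Continuous (gradient u) := by
    unfold gradient
    exact (LinearIsometryEquiv.continuous _).comp (hu.1.1.continuous_fderiv (by simp))
  have hdUc : Continuous dU := by
    apply Continuous.inner _ continuous_const
    exact hgc.comp (by fun_prop)
  have hder : ∀ r, HasDerivAt U (dU r) r := fun r => hasDerivAt_profile hu he0 r
  have hgrad0 : ∀ x : E2, x ∉ tsupport u → gradient u x = 0 := by
    intro x hx
    have : fderiv ℝ u x = 0 := by
      by_contra h
      exact hx (support_fderiv_subset ℝ h)
    simp [gradient, this]
  have hUx : ∀ x : E2, u x = U ‖x‖ := fun x => sigma_eq_radial hu (by simp [norm_pt])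
  have hUsupp : ∀ r, R ≤ r → U r = 0 := by
    intro r hr
    apply image_eq_zero_of_notMem_tsupport (f := u)
    apply hu0
    rw [norm_pt]
    exact hr.trans (le_abs_self r)
  have hdUsupp : ∀ r, R ≤ r → dU r = 0 := by
    intro r hr
    simp only [hdUdef]
    rw [hgrad0, inner_zero_left]
    apply hu0
    rw [norm_smul, he0, mul_one]
    exact hr.trans (le_abs_self r)
  have hanti : ∀ r s, 0 ≤ r → r ≤ s → U s ≤ U r := by
    intro r s hr hrs
    apply hu.2
    rw [norm_pt, norm_pt, abs_of_nonneg hr, abs_of_nonneg (hr.trans hrs)]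
    exact hrs
  have hgle : ∀ x : E2, dU ‖x‖ ^ 2 ≤ ‖gradient u x‖ ^ 2 := by
    intro x
    obtain ⟨e, he, hx⟩ : ∃ e : E2, ‖e‖ = 1 ∧ x = ‖x‖ • e := by
      by_cases h : x = 0
      · exact ⟨pt 1, he0, by simp [h]⟩
      · refine ⟨‖x‖⁻¹ • x, by simp [norm_smul, h], ?_⟩
        rw [smul_smul, mul_inv_cancel₀ (norm_ne_zero_iff.2 h), one_smul]
    have h1 := (hder ‖x‖).unique (hasDerivAt_profile hu he ‖x‖)
    rw [← hx] at h1
    rw [h1, ← sq_abs]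
    apply pow_le_pow_left₀ (abs_nonneg _)
    simpa [he] using abs_real_inner_le_norm (gradient u x) e
  have hcs1 : Integrable (fun x : E2 => ‖gradient u x‖ ^ 2) := by
    apply Continuous.integrable_of_hasCompactSupport (by fun_prop)
    apply HasCompactSupport.intro hu.1.2.1
    intro x hx
    simp [hgrad0 x hx]
  have hcs2 : Integrable (fun x : E2 => dU ‖x‖ ^ 2) := by
    refine hcs1.mono' (by fun_prop) (Eventually.of_forall fun x => ?_)
    rw [norm_of_nonneg (sq_nonneg _)]
    exact hgle x
  have hint1 : ∫ x in B2, dU ‖x‖ ^ 2 ≤ ∫ x in B2, ‖gradient u x‖ ^ 2 :=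
    setIntegral_mono hcs2.integrableOn hcs1.integrableOn hgle
  have hint2 := setIntegral_radial_of_supp (fun r => dU r ^ 2) hR0 hR1
    (fun r hr => by simp [hdUsupp r hr])
  have hint3 := setIntegral_radial_of_supp (fun r => U r ^ 2 / (1 - r ^ 2) ^ 2) hR0 hR1
    (fun r hr => by simp [hUsupp r hr])
  have hH1 : 2 * π * ∫ r in (0 : ℝ)..R, (r * dU r ^ 2 - r * (U r ^ 2 / (1 - r ^ 2) ^ 2)) ≤ 1 := by
    have hUc : Continuous U := continuous_iff_continuousAt.2 fun r => (hder r).continuousAt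
    rw [intervalIntegral.integral_sub (Continuous.intervalIntegrable (by fun_prop) _ _), mul_sub,
      ← hint2, ← hint3]
    · simp only [H, HOn, hUx] at hH
      simp only [← hUx] at hH
      simp only [← hUx]
      linarith
    · apply ContinuousOn.intervalIntegrable
      apply continuousOn_id.mul
      apply ContinuousOn.div (by fun_prop) (by fun_prop)
      intro r hr
      rw [Set.uIcc_of_le hR0] at hr
      have : 0 < 1 - r ^ 2 := by nlinarith [hr.1, hr.2]
      positivity
  intro x hx hx1
  rw [hUx]
  exact one_dim U dU R hder hdUc hR hR1 hUsupp hanti hH1 ‖x‖ (norm_pos_iff.2 hx) hx1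

/-- The majorant `|x|^{-p}` is integrable on the disc for `p < 2`. -/
lemma integrableOn_norm_rpow {p : ℝ} (hp : p < 2) :
    IntegrableOn (fun x : E2 => ‖x‖ ^ (-p)) B2 := by
  rw [B2, integrableOn_fun_norm_addHaar volume (f := fun r : ℝ => r ^ (-p))]
  have h : IntegrableOn (fun r : ℝ => r ^ (1 - p)) (Set.Ioo 0 1) :=
    (intervalIntegral.integrableOn_Ioo_rpow_iff one_pos).2 (by linarith)
  refine h.congr_fun (fun r hr => ?_) measurableSet_Ioo
  simp only [finrank_euclideanSpace, Fintype.card_fin, smul_eq_mul]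
  rw [sub_eq_add_neg, rpow_add hr.1]
  simp

/-- Subcritical Hardy–Moser–Trudinger inequality (Theorem 3, inequality (3.1)):
for every `ε ∈ (0, 4π)` there is `C_ε > 0` such that `∫_B e^{(4π−ε)u²} ≤ C_ε`
for all `u ∈ Σ` with `H(u) ≤ 1`. -/
theorem subcritical_hardy_moser_trudinger :
    ∀ ε : ℝ, 0 < ε → ε < 4 * π →
      ∃ Cε : ℝ, 0 < Cε ∧ ∀ u : E2 → ℝ, IsSigma u → H u ≤ 1 →
        (∫ x in B2, Real.exp ((4 * π - ε) * (u x) ^ 2)) ≤ Cε := by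
  intro ε hε hε4
  -- `α (1 + η) = 4π - ε / 2` is still subcritical.
  set α := 4 * π - ε with hα
  have hα0 : 0 < α := by linarith
  set η := ε / (2 * α) with hη
  have hη0 : 0 < η := by positivity
  set p := (4 * π - ε / 2) / (2 * π) with hp
  have hp2 : p < 2 := by
    rw [hp, div_lt_iff₀ (by positivity)]
    linarith
  have hp0 : 0 < p := by
    apply div_pos _ (by positivity)
    linarith
  have hαη : α * (1 + η) = p * (2 * π) := by
    rw [hp, hη]
    field_simp
    rw [hα]
    ring
  set K := α * (9 * (1 + 1 / η)) with hK
  have hintg : IntegrableOn (fun x : E2 => exp K * ‖x‖ ^ (-p)) B2 :=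
    (integrableOn_norm_rpow hp2).const_mul _
  have hnn : 0 ≤ ∫ x in B2, exp K * ‖x‖ ^ (-p) := integral_nonneg fun x => by positivity
  refine ⟨(∫ x in B2, exp K * ‖x‖ ^ (-p)) + 1, by linarith, fun u hu hH => ?_⟩
  have hpt := sigma_pointwise hu hH
  have hmono : ∫ x in B2, exp (α * u x ^ 2) ≤ ∫ x in B2, exp K * ‖x‖ ^ (-p) := by
    apply integral_mono_of_nonneg (Eventually.of_forall fun x => (exp_pos _).le) hintg
    have hne : ∀ᵐ x : E2 ∂(volume.restrict B2), x ≠ 0 :=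
      ae_restrict_of_ae (Measure.ae_ne volume 0)
    filter_upwards [hne, ae_restrict_mem (Metric.isOpen_ball.measurableSet)] with x hx0 hxB
    have hx1 : ‖x‖ < 1 := by simpa [B2] using hxB
    have hxp : 0 < ‖x‖ := norm_pos_iff.2 hx0
    have hlog : 0 ≤ -log ‖x‖ := by linarith [log_nonpos hxp.le hx1.le]
    have hu0 : 0 ≤ u x := by
      have h := hu.2 x (pt 1) (by rw [norm_pt, abs_one]; exact hx1.le)
      have hpt1 : pt 1 ∉ tsupport u := by
        intro h1
        have := hu.1.2.2 h1
        simp [B2, norm_pt] at this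
      rwa [image_eq_zero_of_notMem_tsupport hpt1] at h
    have key : α * u x ^ 2 ≤ K + p * -log ‖x‖ := by
      rcases hpt x hx0 hx1 with h3 | h3
      · have h9 : u x ^ 2 ≤ 9 := by nlinarith
        have h1 : (9 : ℝ) ≤ 9 * (1 + 1 / η) := by
          have : 0 ≤ 1 / η := by positivity
          linarith
        have h2 : α * u x ^ 2 ≤ K := mul_le_mul_of_nonneg_left (h9.trans h1) hα0.le
        have : 0 ≤ p * -log ‖x‖ := mul_nonneg hp0.le hlog
        linarith
      · have hy : u x ^ 2 ≤ (1 + η) * (u x - 3) ^ 2 + 9 * (1 + 1 / η) := by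
          have h1 : (1 + η) * (u x - 3) ^ 2 + 9 * (1 + 1 / η) - u x ^ 2
              = (η * (u x - 3) - 3) ^ 2 / η := by
            field_simp
            ring
          have h2 : 0 ≤ (η * (u x - 3) - 3) ^ 2 / η := by positivity
          linarith
        calc α * u x ^ 2 ≤ α * ((1 + η) * (u x - 3) ^ 2 + 9 * (1 + 1 / η)) := by gcongr
          _ = K + p * (2 * π * (u x - 3) ^ 2) := by
            rw [mul_add, ← mul_assoc, hαη, hK]
            ring
          _ ≤ K + p * -log ‖x‖ := by gcongr
    calc exp (α * u x ^ 2) ≤ exp (K + p * -log ‖x‖) := exp_le_exp.2 key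
      _ = exp K * ‖x‖ ^ (-p) := by
        rw [exp_add, rpow_def_of_pos hxp]
        congr 2
        ring
  linarith
end
end

section
/- For every r ∈ (0, 1) there exists a constant C_r > 0 such that for all u ∈ Σ, ∫_{B_r} u(x)² dx + ∫_{B_r} |∇u(x)|² dx ≤ C_r · H(u), where B_r is the open disc of radius r centered at the origin. -/
/-!
The function `φ = √(1 - |x|²)` satisfies `-Δφ/φ = 1/(1-|x|²)² + 1/(1-|x|²)`, so the ground state
substitution gives, for every test function `u` (radial monotonicity plays no role),
`H(u) = ∫ |∇u + u x/(1-|x|²)|² + ∫ u²/(1-|x|²)`.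
On a smaller disc `B_r` the integrand on the right controls `u² + |∇u|²` pointwise.

To avoid dividing, everything is written in terms of `v = u/(1-|x|²)`, which is again smooth with
compact support and satisfies `u = (1-|x|²) v` on all of `ℝ²`. The identity for `H` is
then the vanishing of `∫ div(u v x)` (`integral_div_radial_eq_zero`, `hardy_eq`).
-/

open MeasureTheory Real Filter

noncomputable section

/-- The divergence of `x ↦ f(x) x` on `ℝ²`, namely `2 f + x · ∇f`, has integral zero. -/
lemma integral_div_radial_eq_zero (f : E2 → ℝ) (hf : ContDiff ℝ 1 f) (hc : HasCompactSupport f) :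
    ∫ x, (2 * f x + fderiv ℝ f x x) = 0 := by
  have hfc : Continuous f := hf.continuous
  have hf' : Continuous (fderiv ℝ f) := hf.continuous_fderiv (by norm_num)
  have hc' : HasCompactSupport (fderiv ℝ f) := hc.fderiv ℝ
  have hcoord : ∀ (i : Fin 2) (x : E2),
      HasFDerivAt (fun y : E2 => y i) (EuclideanSpace.proj i : E2 →L[ℝ] ℝ) x := fun i x =>
    (EuclideanSpace.proj i : E2 →L[ℝ] ℝ).hasFDerivAt
  have hint : ∀ i : Fin 2, Integrable
      (fun x : E2 => fderiv ℝ f x (EuclideanSpace.single i 1) * x i) := fun i => by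
    refine Continuous.integrable_of_hasCompactSupport (by fun_prop) ?_
    refine hc'.mono' ?_
    intro x hx
    apply subset_tsupport
    intro h0
    simp [h0] at hx
  have hfi : Integrable f := hfc.integrable_of_hasCompactSupport hc
  have key : ∀ i : Fin 2,
      ∫ x : E2, fderiv ℝ f x (EuclideanSpace.single i 1) * x i = - ∫ x, f x := fun i => by
    have hd : ∀ x : E2, fderiv ℝ (fun y : E2 => y i) x (EuclideanSpace.single i 1) = 1 := by
      intro x
      rw [(hcoord i x).fderiv]
      simp
    have h := integral_mul_fderiv_eq_neg_fderiv_mul_of_integrable (𝕜 := ℝ)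
      (μ := (volume : Measure E2))
      (f := f) (g := fun y : E2 => y i) (v := EuclideanSpace.single i 1)
      (hint i) (by simpa only [hd, mul_one] using hfi)
      (Continuous.integrable_of_hasCompactSupport (by fun_prop) hc.mul_right)
      (fun x _ => hf.differentiable (by norm_num) x) (fun x _ => (hcoord i x).differentiableAt)
    simp only [hd, mul_one] at h
    linarith
  have hexp : ∀ x : E2, fderiv ℝ f x x =
      fderiv ℝ f x (EuclideanSpace.single 0 1) * x 0
        + fderiv ℝ f x (EuclideanSpace.single 1 1) * x 1 := by
    intro x
    have hx : x = x 0 • EuclideanSpace.single (0 : Fin 2) (1 : ℝ)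
        + x 1 • EuclideanSpace.single (1 : Fin 2) (1 : ℝ) := by
      ext i
      fin_cases i <;> simp
    conv_lhs => rw [hx]
    rw [map_add, map_smul, map_smul, ← hx]
    simp only [smul_eq_mul]
    ring
  simp only [hexp, ← add_assoc]
  have h01 : Integrable fun x : E2 =>
      2 * f x + fderiv ℝ f x (EuclideanSpace.single 0 1) * x 0 := (hfi.const_mul 2).add (hint 0)
  rw [integral_add h01 (hint 1),
    integral_add (hfi.const_mul 2) (hint 0), key, key, integral_const_mul]
  ring

lemma continuous_gradient {u : E2 → ℝ} (hu : ContDiff ℝ 1 u) : Continuous (gradient u) := by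
  unfold gradient
  exact (InnerProductSpace.toDual ℝ E2).symm.continuous.comp
    (hu.continuous_fderiv (by norm_num))

lemma inner_gradient {u : E2 → ℝ} (x y : E2) : inner ℝ (gradient u x) y = fderiv ℝ u x y := by
  unfold gradient
  rw [InnerProductSpace.toDual_symm_apply]

lemma gradient_eq_zero_of_notMem_tsupport {u : E2 → ℝ} {x : E2} (hx : x ∉ tsupport u) :
    gradient u x = 0 := by
  unfold gradient
  rw [fderiv_of_notMem_tsupport ℝ hx, map_zero]

/-- The quotient `v = u / (1 - |x|²)`, smooth on all of `ℝ²` when `u` is a test function. -/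
def quot (u : E2 → ℝ) (x : E2) : ℝ := u x / (1 - ‖x‖ ^ 2)

lemma one_sub_pos {x : E2} (hx : x ∈ B2) : 0 < 1 - ‖x‖ ^ 2 := by
  have h : ‖x‖ < 1 := by simpa [B2] using hx
  nlinarith [norm_nonneg x]

lemma tsupport_quot_subset (u : E2 → ℝ) : tsupport (quot u) ⊆ tsupport u := by
  refine closure_mono fun x hx h0 => hx ?_
  simp [quot, h0]

lemma quot_contDiff {u : E2 → ℝ} (hu : IsTest u) : ContDiff ℝ 1 (quot u) := by
  refine contDiff_iff_contDiffAt.2 fun x => ?_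
  by_cases hx : x ∈ tsupport (quot u)
  swap
  · exact contDiffAt_const.congr_of_eventuallyEq (notMem_tsupport_iff_eventuallyEq.1 hx)
  have hpos := one_sub_pos (hu.2.2 (tsupport_quot_subset u hx))
  refine ContDiffAt.div (hu.1.contDiffAt.of_le (by exact_mod_cast le_top)) ?_ hpos.ne'
  exact (contDiff_const.sub (contDiff_norm_sq ℝ)).contDiffAt

lemma quot_hasCompactSupport {u : E2 → ℝ} (hu : IsTest u) : HasCompactSupport (quot u) :=
  hu.2.1.of_isClosed_subset (isClosed_tsupport _) (tsupport_quot_subset u)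

lemma eq_zero_of_notMem {u : E2 → ℝ} (hu : IsTest u) {x : E2} (hx : x ∉ B2) : u x = 0 :=
  image_eq_zero_of_notMem_tsupport fun h => hx (hu.2.2 h)

lemma quot_eq_zero_of_notMem {u : E2 → ℝ} (hu : IsTest u) {x : E2} (hx : x ∉ B2) :
    quot u x = 0 := by
  simp [quot, eq_zero_of_notMem hu hx]

lemma eq_mul_quot {u : E2 → ℝ} (hu : IsTest u) (x : E2) :
    u x = (1 - ‖x‖ ^ 2) * quot u x := by
  by_cases hx : x ∈ B2
  · have := (one_sub_pos hx).ne'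
    unfold quot
    field_simp
  · simp [eq_zero_of_notMem hu hx, quot_eq_zero_of_notMem hu hx]

/-- The density `|∇u + v x|² + (1 - |x|²) v²` left over after the ground state substitution. -/
def dens (u : E2 → ℝ) (x : E2) : ℝ :=
  ‖gradient u x + quot u x • x‖ ^ 2 + (1 - ‖x‖ ^ 2) * quot u x ^ 2

lemma dens_nonneg {u : E2 → ℝ} (hu : IsTest u) (x : E2) : 0 ≤ dens u x := by
  unfold dens
  by_cases hx : x ∈ B2
  · have := one_sub_pos hx
    positivity
  · simp [quot_eq_zero_of_notMem hu hx]

lemma IsTest.contDiff_one {u : E2 → ℝ} (hu : IsTest u) : ContDiff ℝ 1 u :=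
  hu.1.of_le (by exact_mod_cast le_top)

lemma integrable_of_tsupport {u g : E2 → ℝ} (hu : IsTest u) (hg : Continuous g)
    (h0 : ∀ x, x ∉ tsupport u → g x = 0) : Integrable g := by
  exact hg.integrable_of_hasCompactSupport (HasCompactSupport.intro hu.2.1 h0)

lemma quot_eq_zero_of_notMem_tsupport {u : E2 → ℝ} {x : E2} (hx : x ∉ tsupport u) :
    quot u x = 0 :=
  image_eq_zero_of_notMem_tsupport fun h => hx (tsupport_quot_subset u h)

lemma integrable_dens {u : E2 → ℝ} (hu : IsTest u) : Integrable (dens u) := by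
  have h1 := continuous_gradient hu.contDiff_one
  have h2 := (quot_contDiff hu).continuous
  refine integrable_of_tsupport hu (by unfold dens; fun_prop) fun x hx => ?_
  simp [dens, gradient_eq_zero_of_notMem_tsupport hx, quot_eq_zero_of_notMem_tsupport hx]

lemma integrable_gradient_sq {u : E2 → ℝ} (hu : IsTest u) :
    Integrable fun x => ‖gradient u x‖ ^ 2 := by
  have h1 := continuous_gradient hu.contDiff_one
  refine integrable_of_tsupport hu (by fun_prop) fun x hx => ?_
  simp [gradient_eq_zero_of_notMem_tsupport hx]

/-- Pointwise, the Hardy integrand differs from `dens u` by the divergence of `-(u v) x`. -/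
lemma dens_add_div {u : E2 → ℝ} (hu : IsTest u) (x : E2) :
    ‖gradient u x‖ ^ 2 - quot u x ^ 2 = dens u x
      - (2 * (u x * quot u x) + fderiv ℝ (fun y => u y * quot u y) x x) := by
  have hv : HasFDerivAt (quot u) (fderiv ℝ (quot u) x) x :=
    ((quot_contDiff hu).differentiable (by norm_num) x).hasFDerivAt
  have hn : HasFDerivAt (fun y : E2 => 1 - ‖y‖ ^ 2) (-(2 • innerSL ℝ x)) x :=
    (hasStrictFDerivAt_norm_sq x).hasFDerivAt.const_sub 1
  have hu' := hn.mul hv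
  have hfun : u = (fun y : E2 => 1 - ‖y‖ ^ 2) * quot u := funext fun y => eq_mul_quot hu y
  rw [← hfun] at hu'
  have huv := hu'.mul hv
  have hin : inner ℝ (gradient u x) x =
      (1 - ‖x‖ ^ 2) * fderiv ℝ (quot u) x x - 2 * ‖x‖ ^ 2 * quot u x := by
    rw [inner_gradient, hu'.fderiv]
    simp
    ring
  have hfd : fderiv ℝ (fun y => u y * quot u y) x x =
      u x * fderiv ℝ (quot u) x x + quot u x * inner ℝ (gradient u x) x := by
    rw [inner_gradient, hu'.fderiv]
    rw [show (fun y => u y * quot u y) = u * quot u from rfl, huv.fderiv]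
    simp
    ring
  rw [hfd, dens, norm_add_sq_real, inner_smul_right, norm_smul, mul_pow, hin, eq_mul_quot hu x,
    Real.norm_eq_abs, sq_abs]
  ring

/-- The ground state identity: `H(u) = ∫ |∇u + v x|² + (1 - |x|²) v²` with `v = u / (1 - |x|²)`. -/
lemma hardy_eq {u : E2 → ℝ} (hu : IsTest u) : H u = ∫ x, dens u x := by
  have hvc := (quot_contDiff hu)
  have huc := hu.contDiff_one
  have hfc : ContDiff ℝ 1 (fun y => u y * quot u y) := huc.mul hvc
  have hfs : HasCompactSupport (fun y => u y * quot u y) := hu.2.1.mul_right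
  have hdiv := integral_div_radial_eq_zero _ hfc hfs
  have hf' := hfc.continuous_fderiv (by norm_num)
  have hdi : Integrable fun x : E2 =>
      2 * (u x * quot u x) + fderiv ℝ (fun y => u y * quot u y) x x := by
    refine Continuous.integrable_of_hasCompactSupport
      ((continuous_const.mul hfc.continuous).add (by fun_prop)) ?_
    refine HasCompactSupport.intro hfs fun x hx => ?_
    rw [fderiv_of_notMem_tsupport ℝ hx]
    have := image_eq_zero_of_notMem_tsupport hx
    simp [this]
  have hv2 : Integrable fun x => quot u x ^ 2 := by
    have := hvc.continuous
    refine integrable_of_tsupport hu (by fun_prop) fun x hx => ?_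
    simp [quot_eq_zero_of_notMem_tsupport hx]
  unfold H HOn
  rw [setIntegral_eq_integral_of_forall_compl_eq_zero (fun x hx => by
      simp [gradient_eq_zero_of_notMem_tsupport (fun h => hx (hu.2.2 h))]),
    setIntegral_eq_integral_of_forall_compl_eq_zero (fun x hx => by
      simp [eq_zero_of_notMem hu hx])]
  simp only [← div_pow]
  change (∫ x, ‖gradient u x‖ ^ 2) - ∫ x, quot u x ^ 2 = _
  rw [← integral_sub (integrable_gradient_sq hu) hv2]
  simp only [dens_add_div hu]
  rw [integral_sub (integrable_dens hu) hdi, hdiv, sub_zero]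

/-- On `B_r` the density controls `u² + |∇u|²`: `|∇u|² ≤ 2 |∇u + v x|² + 2 |x|² v²`, where
`|x| < 1` and `v² ≤ (1 - |x|²) v² / (1 - r²)`, while `u² = (1 - |x|²)² v² ≤ (1 - |x|²) v²`. -/
lemma pointwise_bound {r : ℝ} (hr0 : 0 < r) (hr1 : r < 1) {u : E2 → ℝ} (hu : IsTest u) {x : E2}
    (hx : x ∈ Metric.ball (0 : E2) r) :
    u x ^ 2 + ‖gradient u x‖ ^ 2 ≤ (3 + 2 / (1 - r ^ 2)) * dens u x := by
  have hxr : ‖x‖ < r := by simpa using hx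
  have hn := norm_nonneg x
  have hr : 0 < 1 - r ^ 2 := by nlinarith
  have hs : 1 - r ^ 2 ≤ 1 - ‖x‖ ^ 2 := by nlinarith
  set v := quot u x with hv
  set a := ‖gradient u x + v • x‖ with ha
  have htri : ‖gradient u x‖ ≤ a + |v| * ‖x‖ := by
    have := norm_sub_le (gradient u x + v • x) (v • x)
    rwa [add_sub_cancel_right, norm_smul, Real.norm_eq_abs] at this
  have hg : ‖gradient u x‖ ^ 2 ≤ 2 * a ^ 2 + 2 * (v ^ 2 * ‖x‖ ^ 2) := by
    have h1 := pow_le_pow_left₀ (norm_nonneg _) htri 2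
    have h2 : (|v| * ‖x‖) ^ 2 = v ^ 2 * ‖x‖ ^ 2 := by rw [mul_pow, sq_abs]
    nlinarith [sq_nonneg (a - |v| * ‖x‖)]
  have hvs : v ^ 2 ≤ 1 / (1 - r ^ 2) * ((1 - ‖x‖ ^ 2) * v ^ 2) := by
    rw [one_div, ← div_eq_inv_mul, le_div_iff₀ hr]
    nlinarith [mul_le_mul_of_nonneg_right hs (sq_nonneg v)]
  have hvx : v ^ 2 * ‖x‖ ^ 2 ≤ v ^ 2 :=
    mul_le_of_le_one_right (sq_nonneg v) (by nlinarith)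
  have hux : u x ^ 2 ≤ (1 - ‖x‖ ^ 2) * v ^ 2 := by
    rw [eq_mul_quot hu x, mul_pow]
    refine mul_le_mul_of_nonneg_right ?_ (sq_nonneg _)
    nlinarith [sq_nonneg ‖x‖]
  have hd : dens u x = a ^ 2 + (1 - ‖x‖ ^ 2) * v ^ 2 := rfl
  have hw : 0 ≤ (1 - ‖x‖ ^ 2) * v ^ 2 := mul_nonneg (hr.le.trans hs) (sq_nonneg v)
  have hk : 0 ≤ 1 / (1 - r ^ 2) * a ^ 2 := by positivity
  have h2 : 2 / (1 - r ^ 2) = 2 * (1 / (1 - r ^ 2)) := by ring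
  rw [hd, h2]
  nlinarith [sq_nonneg a]

/-- Estimate (2.4) in Lemma 1: for every `r ∈ (0, 1)` there is `C_r > 0` such that
`∫_{B_r} u² + ∫_{B_r} |∇u|² ≤ C_r H(u)` for all `u ∈ Σ`. -/
theorem local_H1_bound_by_hardy :
    ∀ r : ℝ, 0 < r → r < 1 →
      ∃ Cr : ℝ, 0 < Cr ∧ ∀ u : E2 → ℝ, IsSigma u →
        (∫ x in Metric.ball (0 : E2) r, (u x) ^ 2)
          + (∫ x in Metric.ball (0 : E2) r, ‖gradient u x‖ ^ 2) ≤ Cr * H u := by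
  intro r hr0 hr1
  have hr : 0 < 1 - r ^ 2 := by nlinarith
  refine ⟨3 + 2 / (1 - r ^ 2), by positivity, fun u hu => ?_⟩
  have ht := hu.1
  have hu2 : Integrable fun x => u x ^ 2 := by
    have := ht.1.continuous
    refine integrable_of_tsupport ht (by fun_prop) fun x hx => ?_
    simp [image_eq_zero_of_notMem_tsupport hx]
  have hg2 := integrable_gradient_sq ht
  have hdi := (integrable_dens ht).const_mul (3 + 2 / (1 - r ^ 2))
  rw [← integral_add hu2.integrableOn hg2.integrableOn, hardy_eq ht, ← integral_const_mul]
  calc _ ≤ ∫ x in Metric.ball (0 : E2) r, (3 + 2 / (1 - r ^ 2)) * dens u x :=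
        setIntegral_mono_on (hu2.add hg2).integrableOn hdi.integrableOn measurableSet_ball
          fun x hx => pointwise_bound hr0 hr1 ht hx
    _ ≤ _ := setIntegral_le_integral hdi (Eventually.of_forall fun x =>
        mul_nonneg (by positivity) (dens_nonneg ht x))
end
end
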